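/- Let n, m ≥ 0 be integers, let b₁, b₂ be nonzero real numbers, and let y₁, y₂ be real numbers. Then for every real x, Σ_{a=0}^{m+n+1} (−1)^a·C(m+n+1, a)·b₁^a·b₂^{m+n+1−a}·B_{m+n+1−a}(b₁x+y₁)·B_a(b₂x+y₂) = Σ_{a=0}^{m+n+1} (−1)^a·C(m+n+1, a)·b₁^a·b₂^{m+n+1−a}·B_{m+n+1−a}(y₁)·B_a(y₂); that is, the left-hand side is independent of x. -/

import Mathlib

open Finset

/-- The `n`-th Bernoulli polynomial evaluated at a real number. -/
noncomputable def BPoly (n : ℕ) (x : ℝ) : ℝ :=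
  Polynomial.eval x ((Polynomial.bernoulli n).map (algebraMap ℚ ℝ))

theorem BPoly_hasDerivAt (k : ℕ) (x : ℝ) :
    HasDerivAt (BPoly k) (k * BPoly (k - 1) x) x := by
  have h := ((Polynomial.bernoulli k).map (algebraMap ℚ ℝ)).hasDerivAt x
  rw [Polynomial.derivative_map, Polynomial.derivative_bernoulli] at h
  have e : Polynomial.eval x (Polynomial.map (algebraMap ℚ ℝ)
      ((k : Polynomial ℚ) * Polynomial.bernoulli (k - 1))) = k * BPoly (k - 1) x := by
    simp [BPoly]
  rw [e] at h
  exact h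

theorem BPoly_comp_hasDerivAt (k : ℕ) (b y x : ℝ) :
    HasDerivAt (fun t => BPoly k (b * t + y)) (k * BPoly (k - 1) (b * x + y) * b) x := by
  have h1 : HasDerivAt (fun t : ℝ => b * t + y) b x := by
    simpa using ((hasDerivAt_id x).const_mul b).add_const y
  exact (BPoly_hasDerivAt k (b * x + y)).comp x h1

theorem conv_deriv (K : ℕ) (b₁ b₂ y₁ y₂ x : ℝ) :
    HasDerivAt (fun t => ∑ a ∈ Finset.range (K + 2), (-1 : ℝ) ^ a * (Nat.choose (K + 1) a : ℝ) *
        b₁ ^ a * b₂ ^ (K + 1 - a) * BPoly (K + 1 - a) (b₁ * t + y₁) *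
        BPoly a (b₂ * t + y₂)) 0 x := by
  have h := HasDerivAt.fun_sum (u := Finset.range (K + 2)) (x := x) (fun a _ =>
    ((BPoly_comp_hasDerivAt (K + 1 - a) b₁ y₁ x).const_mul
      ((-1 : ℝ) ^ a * (Nat.choose (K + 1) a : ℝ) * b₁ ^ a * b₂ ^ (K + 1 - a))).mul
      (BPoly_comp_hasDerivAt a b₂ y₂ x))
  refine h.congr_deriv ?_
  rw [Finset.sum_add_distrib, Finset.sum_range_succ, Finset.sum_range_succ' _ (K + 1)]
  simp only [Nat.sub_self, Nat.cast_zero, zero_mul, mul_zero, add_zero]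
  rw [← Finset.sum_add_distrib]
  refine Finset.sum_eq_zero fun a ha => ?_
  have ha' : a ≤ K := by simpa [Nat.lt_succ_iff] using ha
  obtain ⟨d, rfl⟩ := Nat.exists_eq_add_of_le ha'
  have e1 : a + d + 1 - a = d + 1 := by omega
  have e2 : a + d + 1 - (a + 1) = d := by omega
  have hc : (Nat.choose (a + d + 1) (a + 1) : ℝ) * ((a + 1 : ℕ) : ℝ) =
      (Nat.choose (a + d + 1) a : ℝ) * ((d + 1 : ℕ) : ℝ) := by
    have := Nat.choose_succ_right_eq (a + d + 1) a
    rw [e1] at this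
    exact_mod_cast this
  rw [e1, e2, Nat.add_sub_cancel, Nat.add_sub_cancel, pow_succ, pow_succ, pow_succ]
  linear_combination (-(-1 : ℝ) ^ a * b₁ ^ a * b₁ * b₂ ^ d * b₂ * BPoly d (b₁ * x + y₁) *
    BPoly a (b₂ * x + y₂)) * hc

/-- The alternating binomial convolution of Bernoulli polynomials
`Σ (−1)^a C(m+n+1,a) b₁^a b₂^{m+n+1−a} B_{m+n+1−a}(b₁x+y₁) B_a(b₂x+y₂)` is independent of `x`. -/
theorem bernoulli_convolution_independent_of_x (n m : ℕ) (b₁ b₂ : ℝ)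
    (hb₁ : b₁ ≠ 0) (hb₂ : b₂ ≠ 0) (y₁ y₂ : ℝ) (x : ℝ) :
    ∑ a ∈ Finset.range (m + n + 2), (-1 : ℝ) ^ a * (Nat.choose (m + n + 1) a : ℝ) *
        b₁ ^ a * b₂ ^ (m + n + 1 - a) * BPoly (m + n + 1 - a) (b₁ * x + y₁) *
        BPoly a (b₂ * x + y₂) =
      ∑ a ∈ Finset.range (m + n + 2), (-1 : ℝ) ^ a * (Nat.choose (m + n + 1) a : ℝ) *
        b₁ ^ a * b₂ ^ (m + n + 1 - a) * BPoly (m + n + 1 - a) y₁ * BPoly a y₂ := by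
  have h := is_const_of_deriv_eq_zero
    (fun t => (conv_deriv (m + n) b₁ b₂ y₁ y₂ t).differentiableAt)
    (fun t => (conv_deriv (m + n) b₁ b₂ y₁ y₂ t).deriv) x 0
  simpa only [mul_zero, zero_add] using h
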